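/- arXiv:2401.11016 — 2 statements merged into one kernel-verified Lean document; each statement's English description precedes it below -/
import Mathlib

section
/- If u_j ≥ u_i, then under the PL+C model Pr(j ≻_R i | i, j ∈ R) ≥ 1/2: among rankings containing both i and j, the total PL+C probability of those ranking j above i is at least the total PL+C probability of those ranking i above j. -/
open scoped Classical
open Finset

noncomputable section

/-- Weight of a consideration set `C`: each item in `C` is considered (prob `p i`),
each item outside is not considered (prob `1 - p j`). -/
def considerWeight (n : ℕ) (p : Fin n → ℝ) (C : Finset (Fin n)) : ℝ :=
  (∏ i ∈ C, p i) * ∏ j ∈ Cᶜ, (1 - p j)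

/-- Normalizing constant `z_{k,p}`: total weight of consideration sets of size at least `k`. -/
def zConst (n k : ℕ) (p : Fin n → ℝ) : ℝ :=
  ∑ C ∈ Finset.univ.filter (fun C : Finset (Fin n) => k ≤ C.card), considerWeight n p C

/-- Probability of consideration set `C` (conditioned on `|C| ≥ k`). -/
def prC (n k : ℕ) (p : Fin n → ℝ) (C : Finset (Fin n)) : ℝ :=
  if k ≤ C.card then considerWeight n p C / zConst n k p else 0

/-- Plackett–Luce probability of the length-`k` ranking `r` given consideration set `C`. -/
def prPL (n k : ℕ) (u : Fin n → ℝ) (r : Fin k ↪ Fin n) (C : Finset (Fin n)) : ℝ :=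
  if ∀ t : Fin k, r t ∈ C then
    ∏ t : Fin k, Real.exp (u (r t)) /
      ∑ j ∈ C \ (Finset.Iio t).image r, Real.exp (u j)
  else 0

/-- Plackett–Luce-with-consideration (PL+C) probability of the ranking `r`. -/
def prPLC (n k : ℕ) (u p : Fin n → ℝ) (r : Fin k ↪ Fin n) : ℝ :=
  ∑ C : Finset (Fin n), prC n k p C * prPL n k u r C

/-- PL probability of a set of rankings. -/
def prPLset (n k : ℕ) (u : Fin n → ℝ) (R : Finset (Fin k ↪ Fin n)) (C : Finset (Fin n)) : ℝ :=
  ∑ r ∈ R, prPL n k u r C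

/-- PL+C probability of a set of rankings. -/
def prPLCset (n k : ℕ) (u p : Fin n → ℝ) (R : Finset (Fin k ↪ Fin n)) : ℝ :=
  ∑ r ∈ R, prPLC n k u p r

/-- `R_{i≤ℓ}`: the set of length-`k` rankings with item `i` among the top `ℓ` positions. -/
def topSet (n k : ℕ) (i : Fin n) (ℓ : ℕ) : Finset (Fin k ↪ Fin n) :=
  Finset.univ.filter (fun r => ∃ t : Fin k, (t : ℕ) < ℓ ∧ r t = i)

/-- The set of length-`k` rankings containing both `i` and `j`, with `i` ranked above `j`. -/
def aboveSet (n k : ℕ) (i j : Fin n) : Finset (Fin k ↪ Fin n) :=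
  Finset.univ.filter (fun r => ∃ s t : Fin k, s < t ∧ r s = i ∧ r t = j)

/-!
Exchanging `i` and `j` in a ranking turns those with `i` above `j` into those with `j` above `i`.
For a fixed consideration set the Plackett–Luce numerators are only permuted, while moving the
heavier item `j` forward removes more weight from every later choice set, so no denominator grows.
The inequality thus holds for each consideration set separately, hence for any mixture of them.
-/

lemma sum_le_sum_comp_swap {ι M : Type*} [DecidableEq ι] [AddCommMonoid M] [Preorder M]
    [AddLeftMono M] {A : Finset ι} {s t : ι} {f : ι → M} (hA : t ∈ A → s ∈ A)
    (hf : f s ≤ f t) : ∑ x ∈ A, f x ≤ ∑ x ∈ A, f (Equiv.swap s t x) := by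
  by_cases ht : t ∈ A
  · refine (Equiv.Perm.sum_comp (Equiv.swap s t) A f fun x hx => ?_).ge
    obtain ⟨-, rfl | rfl⟩ := Equiv.swap_apply_ne_self_iff.1 hx
    exacts [hA ht, ht]
  · refine sum_le_sum fun x hx => ?_
    obtain rfl | hxs := eq_or_ne x s
    · rwa [Equiv.swap_apply_left]
    · rw [Equiv.swap_apply_of_ne_of_ne hxs (ne_of_mem_of_not_mem hx ht)]

lemma sum_sdiff_image_eq_sub {ι α M : Type*} [DecidableEq α] [AddCommGroup M] {C : Finset α}
    {A : Finset ι} (r : ι ↪ α) (hr : ∀ x ∈ A, r x ∈ C) (f : α → M) :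
    ∑ a ∈ C \ A.image r, f a = ∑ a ∈ C, f a - ∑ x ∈ A, f (r x) := by
  rw [sum_sdiff_eq_sub (image_subset_iff.2 hr), sum_image r.injective.injOn]

section PlackettLuce

variable {n k : ℕ} {u : Fin n → ℝ} {C : Finset (Fin n)}

lemma sum_exp_sdiff_image_Iio_pos (r : Fin k ↪ Fin n) (u : Fin n → ℝ) {x : Fin k}
    (hx : r x ∈ C) : 0 < ∑ a ∈ C \ (Iio x).image r, Real.exp (u a) :=
  sum_pos (fun _ _ => Real.exp_pos _) ⟨r x, by simp [hx]⟩

lemma prPL_nonneg (r : Fin k ↪ Fin n) : 0 ≤ prPL n k u r C := by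
  unfold prPL
  split_ifs <;> positivity

/-- The ranking `r` with the items in positions `s` and `t` exchanged. -/
def swapPositions (r : Fin k ↪ Fin n) (s t : Fin k) : Fin k ↪ Fin n :=
  (Equiv.swap s t).toEmbedding.trans r

lemma swapPositions_apply (r : Fin k ↪ Fin n) (s t x : Fin k) :
    swapPositions r s t x = r (Equiv.swap s t x) :=
  rfl

lemma sum_exp_sdiff_image_swapPositions_le {r : Fin k ↪ Fin n} (hr : ∀ x, r x ∈ C) {s t : Fin k}
    (hst : s ≤ t) (hu : u (r s) ≤ u (r t)) (x : Fin k) :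
    ∑ a ∈ C \ (Iio x).image (swapPositions r s t), Real.exp (u a) ≤
      ∑ a ∈ C \ (Iio x).image r, Real.exp (u a) := by
  rw [sum_sdiff_image_eq_sub r fun y _ => hr y,
    sum_sdiff_image_eq_sub (swapPositions r s t) fun y _ => hr _]
  refine sub_le_sub_left (sum_le_sum_comp_swap (f := fun y => Real.exp (u (r y))) ?_ ?_) _
  · exact fun ht => mem_Iio.2 (hst.trans_lt (mem_Iio.1 ht))
  · exact Real.exp_le_exp.2 hu

lemma prPL_le_prPL_swapPositions (r : Fin k ↪ Fin n) {s t : Fin k} (hst : s ≤ t)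
    (hu : u (r s) ≤ u (r t)) : prPL n k u r C ≤ prPL n k u (swapPositions r s t) C := by
  by_cases hr : ∀ x, r x ∈ C
  · have hr' : ∀ x, swapPositions r s t x ∈ C := fun x => hr _
    have numerator_eq : ∏ x, Real.exp (u (swapPositions r s t x)) = ∏ x, Real.exp (u (r x)) :=
      Equiv.prod_comp (Equiv.swap s t) fun x => Real.exp (u (r x))
    rw [prPL, prPL, if_pos hr, if_pos hr', prod_div_distrib, prod_div_distrib, numerator_eq]
    have denominator_pos (x : Fin k) := sum_exp_sdiff_image_Iio_pos _ u (hr' x)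
    refine div_le_div_of_nonneg_left (by positivity) (prod_pos fun x _ => denominator_pos x) ?_
    exact prod_le_prod (fun x _ => (denominator_pos x).le) fun x _ =>
      sum_exp_sdiff_image_swapPositions_le hr hst hu x
  · rw [prPL, if_neg hr]
    exact prPL_nonneg _

lemma mem_aboveSet {i j : Fin n} {r : Fin k ↪ Fin n} :
    r ∈ aboveSet n k i j ↔ ∃ s t, s < t ∧ r s = i ∧ r t = j := by
  simp only [aboveSet, mem_filter, mem_univ, true_and]

/-- The action of a permutation of the items on rankings. -/
def relabel (σ : Equiv.Perm (Fin n)) : Equiv.Perm (Fin k ↪ Fin n) :=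
  Equiv.embeddingCongr (Equiv.refl (Fin k)) σ

lemma relabel_apply (σ : Equiv.Perm (Fin n)) (r : Fin k ↪ Fin n) (x : Fin k) :
    relabel σ r x = σ (r x) :=
  rfl

lemma relabel_mem_aboveSet_iff (σ : Equiv.Perm (Fin n)) {i j : Fin n} {r : Fin k ↪ Fin n} :
    relabel σ r ∈ aboveSet n k (σ i) (σ j) ↔ r ∈ aboveSet n k i j := by
  simp only [mem_aboveSet, relabel_apply, σ.apply_eq_iff_eq]

lemma relabel_swap_mem_aboveSet_iff (i j : Fin n) {r : Fin k ↪ Fin n} :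
    relabel (Equiv.swap i j) r ∈ aboveSet n k j i ↔ r ∈ aboveSet n k i j := by
  simpa only [Equiv.swap_apply_left, Equiv.swap_apply_right] using
    relabel_mem_aboveSet_iff (Equiv.swap i j) (i := i) (j := j) (r := r)

lemma relabel_swap_eq_swapPositions (r : Fin k ↪ Fin n) (s t : Fin k) :
    relabel (Equiv.swap (r s) (r t)) r = swapPositions r s t := by
  ext x
  rw [relabel_apply, swapPositions_apply, r.swap_apply]

lemma prPLset_aboveSet_le {i j : Fin n} (hu : u i ≤ u j) (C : Finset (Fin n)) :
    prPLset n k u (aboveSet n k i j) C ≤ prPLset n k u (aboveSet n k j i) C := by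
  have reindex : ∑ r ∈ aboveSet n k i j, prPL n k u (relabel (Equiv.swap i j) r) C =
      prPLset n k u (aboveSet n k j i) C :=
    sum_equiv (relabel (Equiv.swap i j))
      (fun _ => (relabel_swap_mem_aboveSet_iff i j).symm) fun _ _ => rfl
  rw [← reindex]
  refine sum_le_sum fun r hr => ?_
  obtain ⟨s, t, hst, rfl, rfl⟩ := mem_aboveSet.1 hr
  rw [relabel_swap_eq_swapPositions]
  exact prPL_le_prPL_swapPositions r hst.le hu

end PlackettLuce

section Consideration

variable {n : ℕ} {p : Fin n → ℝ}

lemma considerWeight_nonneg (hp₀ : ∀ a, 0 ≤ p a) (hp₁ : ∀ a, p a ≤ 1) (C : Finset (Fin n)) :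
    0 ≤ considerWeight n p C :=
  mul_nonneg (prod_nonneg fun a _ => hp₀ a) (prod_nonneg fun a _ => sub_nonneg.2 (hp₁ a))

lemma prC_nonneg (k : ℕ) (hp₀ : ∀ a, 0 ≤ p a) (hp₁ : ∀ a, p a ≤ 1) (C : Finset (Fin n)) :
    0 ≤ prC n k p C := by
  have hw := considerWeight_nonneg hp₀ hp₁
  unfold prC
  split_ifs
  · exact div_nonneg (hw C) (sum_nonneg fun D _ => hw D)
  · exact le_rfl

lemma prPLCset_eq_sum_prC_mul_prPLset (k : ℕ) (u p : Fin n → ℝ) (R : Finset (Fin k ↪ Fin n)) :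
    prPLCset n k u p R = ∑ C, prC n k p C * prPLset n k u R C := by
  simp only [prPLCset, prPLC, prPLset, mul_sum]
  exact sum_comm

end Consideration

/-- if `u j ≥ u i`, then among PL+C rankings containing both `i` and `j`, the
total probability of those ranking `j` above `i` is at least that of those ranking `i`
above `j`. -/
theorem higher_utility_ranked_higher (n k : ℕ) (u p : Fin n → ℝ) (i j : Fin n)
    (hp : ∀ a, 0 < p a ∧ p a ≤ 1) (hu : u j ≥ u i) :
    prPLCset n k u p (aboveSet n k j i) ≥ prPLCset n k u p (aboveSet n k i j) := by
  rw [prPLCset_eq_sum_prC_mul_prPLset, prPLCset_eq_sum_prC_mul_prPLset]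
  exact sum_le_sum fun C _ => mul_le_mul_of_nonneg_left (prPLset_aboveSet_le hu C)
    (prC_nonneg k (fun a => (hp a).1.le) (fun a => (hp a).2) C)
end
end

section
/- Let r be a length-k ranking containing item i but not item j, let r_{i→j} be r with item i replaced by item j in its position, and let C ⊆ U with {r_1,...,r_k} ⊆ C, i ∈ C, and j ∈ C. If u_i > u_j, then Pr_PL(r | C) > Pr_PL(r_{i→j} | C). -/
open scoped Classical
open Finset

noncomputable section

/-!
Replacing `i` by `j` in the ranking and keeping `C ∋ i, j` amounts to keeping the ranking and
exchanging the utilities of `i` and `j`. This exchange lowers the numerator at the position of `i`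
and fixes the others. Since `j` is never removed, a denominator is unchanged as long as `i` is
still available, and afterwards it grows, because `j` now carries the larger utility `u i`.
-/

section Swap

variable {α M : Type*} [DecidableEq α] {i j : α} {w : α → M} {A : Finset α}

theorem setOf_swap_apply_ne_subset (hi : i ∈ A) (hj : j ∈ A) :
    {a | Equiv.swap i j a ≠ a} ⊆ A := by
  intro a ha
  obtain rfl | rfl := (Equiv.swap_apply_ne_self_iff.1 ha).2
  exacts [hi, hj]

theorem apply_swap_le_of_ne [Preorder M] (hw : w j ≤ w i) {x : α} (hx : x ≠ j) :
    w (Equiv.swap i j x) ≤ w x := by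
  obtain rfl | hxi := eq_or_ne x i
  · rwa [Equiv.swap_apply_left]
  · rw [Equiv.swap_apply_of_ne_of_ne hxi hx]

theorem le_apply_swap_of_ne [Preorder M] (hw : w j ≤ w i) {x : α} (hx : x ≠ i) :
    w x ≤ w (Equiv.swap i j x) := by
  have hswap : Equiv.swap i j x ≠ j := by
    rwa [Ne, Equiv.swap_apply_eq_iff, Equiv.swap_apply_right]
  simpa only [Equiv.swap_apply_self] using apply_swap_le_of_ne hw hswap

theorem sum_le_sum_apply_swap [AddCommMonoid M] [Preorder M] [AddLeftMono M]
    (hw : w j ≤ w i) (hA : i ∈ A → j ∈ A) :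
    ∑ x ∈ A, w x ≤ ∑ x ∈ A, w (Equiv.swap i j x) := by
  by_cases hi : i ∈ A
  · exact (Equiv.Perm.sum_comp _ A w (setOf_swap_apply_ne_subset hi (hA hi))).ge
  · exact sum_le_sum fun x hx => le_apply_swap_of_ne hw (ne_of_mem_of_not_mem hx hi)

end Swap

section RemainingItems

variable {ι α β : Type*} [Preorder ι] [LocallyFiniteOrderBot ι] [DecidableEq α] [DecidableEq β]

/-- The items of `C` still available at position `t` of the ranking `r`, that is, those not placed
at an earlier position. The choice at position `t` is normalized by their total weight. -/
def remainingItems (r : ι ↪ α) (C : Finset α) (t : ι) : Finset α :=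
  C \ (Iio t).image r

theorem mem_remainingItems {r : ι ↪ α} {C : Finset α} {t : ι} {x : α} :
    x ∈ remainingItems r C t ↔ x ∈ C ∧ ∀ s < t, r s ≠ x := by
  simp [remainingItems]

theorem apply_mem_remainingItems {r : ι ↪ α} {C : Finset α} {t : ι} (ht : r t ∈ C) :
    r t ∈ remainingItems r C t :=
  mem_remainingItems.2 ⟨ht, fun _ hst => r.injective.ne hst.ne⟩

theorem remainingItems_trans_map (r : ι ↪ α) (e : α ↪ β) (C : Finset α) (t : ι) :
    remainingItems (r.trans e) (C.map e) t = (remainingItems r C t).map e := by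
  simp only [remainingItems, map_eq_image, image_sdiff _ _ e.injective, image_image,
    Function.Embedding.coe_trans]

end RemainingItems

section PlackettLuce

variable {m n k : ℕ} {u v : Fin n → ℝ} {r : Fin k ↪ Fin n} {C : Finset (Fin n)}

theorem prPL_of_forall_mem (hr : ∀ t, r t ∈ C) :
    prPL n k u r C =
      ∏ t, Real.exp (u (r t)) / ∑ x ∈ remainingItems r C t, Real.exp (u x) :=
  if_pos hr

theorem prPL_trans_map (u : Fin m → ℝ) (r : Fin k ↪ Fin n) (e : Fin n ↪ Fin m)
    (C : Finset (Fin n)) :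
    prPL m k u (r.trans e) (C.map e) = prPL n k (u ∘ e) r C := by
  by_cases hr : ∀ t, r t ∈ C
  · have hre : ∀ t, r.trans e t ∈ C.map e := fun t => mem_map_of_mem e (hr t)
    simp only [prPL_of_forall_mem hr, prPL_of_forall_mem hre, remainingItems_trans_map, sum_map,
      Function.Embedding.trans_apply, Function.comp_apply]
  · have hre : ¬∀ t, r.trans e t ∈ C.map e := fun h => hr fun t => (mem_map' e).1 (h t)
    rw [prPL, prPL, if_neg hr, if_neg hre]

theorem sum_exp_remainingItems_pos (u : Fin n → ℝ) {t : Fin k} (ht : r t ∈ C) :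
    0 < ∑ x ∈ remainingItems r C t, Real.exp (u x) :=
  sum_pos (fun _ _ => Real.exp_pos _) ⟨r t, apply_mem_remainingItems ht⟩

theorem prPL_lt_prPL (hr : ∀ t, r t ∈ C) (hle : ∀ t, v (r t) ≤ u (r t))
    (hlt : ∃ t, v (r t) < u (r t))
    (hsum : ∀ t, ∑ x ∈ remainingItems r C t, Real.exp (u x) ≤
      ∑ x ∈ remainingItems r C t, Real.exp (v x)) :
    prPL n k v r C < prPL n k u r C := by
  obtain ⟨s, hs⟩ := hlt
  rw [prPL_of_forall_mem hr, prPL_of_forall_mem hr]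
  refine prod_lt_prod (fun t _ => ?_) (fun t _ => ?_) ⟨s, mem_univ s, ?_⟩
  · exact div_pos (Real.exp_pos _) (sum_exp_remainingItems_pos v (hr t))
  · exact div_le_div₀ (Real.exp_pos _).le (Real.exp_le_exp.2 (hle t))
      (sum_exp_remainingItems_pos u (hr t)) (hsum t)
  · exact div_lt_div₀ (Real.exp_lt_exp.2 hs) (hsum s) (Real.exp_pos _).le
      (sum_exp_remainingItems_pos u (hr s))

end PlackettLuce

/-- replacing item `i` in a ranking by a lower-utility item `j ∈ C` not
appearing in the ranking strictly decreases the Plackett–Luce probability. -/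
theorem replace_decreases_prPL (n k : ℕ) (u : Fin n → ℝ) (i j : Fin n)
    (r : Fin k ↪ Fin n) (C : Finset (Fin n)) (hu : u i > u j)
    (s : Fin k) (hs : r s = i) (hj : ∀ t : Fin k, r t ≠ j)
    (hrC : ∀ a : Fin k, r a ∈ C) (hjC : j ∈ C) :
    prPL n k u r C > prPL n k u (r.trans (Equiv.swap i j).toEmbedding) C := by
  have hC : C.map (Equiv.swap i j).toEmbedding = C :=
    map_perm (setOf_swap_apply_ne_subset (hs ▸ hrC s) hjC)
  have hrelabel : prPL n k u (r.trans (Equiv.swap i j).toEmbedding) C =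
      prPL n k (u ∘ Equiv.swap i j) r C := by
    simpa only [hC, Equiv.coe_toEmbedding] using prPL_trans_map u r (Equiv.swap i j).toEmbedding C
  have hlt : (u ∘ Equiv.swap i j) (r s) < u (r s) := by
    rwa [Function.comp_apply, hs, Equiv.swap_apply_left]
  rw [gt_iff_lt, hrelabel]
  refine prPL_lt_prPL hrC (fun t => apply_swap_le_of_ne hu.le (hj t)) ⟨s, hlt⟩ fun t => ?_
  have hjt : j ∈ remainingItems r C t := mem_remainingItems.2 ⟨hjC, fun a _ => hj a⟩
  exact sum_le_sum_apply_swap (w := fun x => Real.exp (u x)) (Real.exp_le_exp.2 hu.le) fun _ => hjt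
end
end
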